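/- For every setting, every type profile t, and every priority ordering π, there exists a priority ordering π' such that ABM_π(t) = SD_{π'}(t); in particular, the deterministic allocation ABM_π(t) is ex-post efficient at t. -/

import Mathlib

/-! Each round of the adaptive Boston mechanism only ever gives an agent its favourite object among
those that had copies left at the *start* of the round.  Capacities only decrease, so if a copy is
still there when the agent's application is processed, that object is also its favourite with respect
to the *current* capacities (`favorite_anti`).  Listing the agents in the order in which they
are assigned, the state of the mechanism is thus always the state of a serial dictatorship run
on that list (`SDState`, preserved by each application and hence by each round,
`SDState.applyRound`).

As total capacity is at least `n`, some copy is left as long as some agent is unassigned, so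
every round assigns at least one agent (`SDState.round_progress`), and after `n` rounds the list
contains everybody; it is then the priority list of some permutation `π'`.

Efficiency holds for every serial dictatorship: if `y` is feasible and weakly improves on its
outcome, then going down the list each agent finds the object `y` gives it still available, so it
gets something at least as good, hence exactly that object (`sd_rigid`). -/

open Finset

/-- A preference type (strict ranking of the `m` objects): `t k` is the object
ranked `k`-th (0-indexed).  Object `a` is preferred to `b` iff
`t.symm a < t.symm b`. -/
abbrev Pref (m : ℕ) := Fin m ≃ Fin m

/-- One round of a Boston-style mechanism: the agents in `order` (highest priority
first) that are not yet assigned apply to `choice i`; an applicant receives a copy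
iff the remaining capacity of its chosen object is still positive. -/
def applyRound {n m : ℕ} (choice : Fin n → Option (Fin m)) (order : List (Fin n))
    (st : (Fin n → Option (Fin m)) × (Fin m → ℕ)) :
    (Fin n → Option (Fin m)) × (Fin m → ℕ) :=
  order.foldl
    (fun s i =>
      match s.1 i with
      | some _ => s
      | none =>
        match choice i with
        | none => s
        | some j =>
          if 0 < s.2 j then
            (Function.update s.1 i (some j), Function.update s.2 j (s.2 j - 1))
          else s)
    st

/-- The list of agents in order of priority under `π` (the agent with `π i = 0` first). -/
def priorityList {n : ℕ} (π : Equiv.Perm (Fin n)) : List (Fin n) :=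
  (List.finRange n).map π.symm

/-- The most preferred object (under `ti`) among the objects with positive
remaining capacity, if any such object exists. -/
def favorite {m : ℕ} (ti : Pref m) (cap : Fin m → ℕ) : Option (Fin m) :=
  ((List.finRange m).find? (fun k => decide (0 < cap (ti k)))).map ti

/-- The naïve Boston mechanism for a fixed priority ordering `π`: in round `k`
every not-yet-assigned agent applies to its `k`-th ranked object. -/
def NBMassign {n m : ℕ} (q : Fin m → ℕ) (t : Fin n → Pref m) (π : Equiv.Perm (Fin n)) :
    Fin n → Option (Fin m) :=
  ((List.finRange m).foldl
    (fun st k => applyRound (fun i => some (t i k)) (priorityList π) st)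
    ((fun _ => none), q)).1

/-- The adaptive Boston mechanism for a fixed priority ordering `π`: in every round
each not-yet-assigned agent applies to its most preferred object among the objects
with strictly positive remaining capacity (at the beginning of the round). -/
def ABMassign {n m : ℕ} (q : Fin m → ℕ) (t : Fin n → Pref m) (π : Equiv.Perm (Fin n)) :
    Fin n → Option (Fin m) :=
  ((fun st => applyRound (fun i => favorite (t i) st.2) (priorityList π) st)^[n]
    ((fun _ => none), q)).1

/-- The serial dictatorship for a fixed priority ordering `π`: agents are processed
in order of priority, each receiving one copy of its most preferred object among
those with remaining capacity. -/
def SDassign {n m : ℕ} (q : Fin m → ℕ) (t : Fin n → Pref m) (π : Equiv.Perm (Fin n)) :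
    Fin n → Option (Fin m) :=
  ((priorityList π).foldl
    (fun s i =>
      match favorite (t i) s.2 with
      | none => s
      | some j => (Function.update s.1 i (some j), Function.update s.2 j (s.2 j - 1)))
    ((fun _ => none), q)).1

/-- The (deterministic) allocation matrix induced by an assignment of objects to agents. -/
def detAlloc {n m : ℕ} (a : Fin n → Option (Fin m)) : Fin n → Fin m → ℝ :=
  fun i j => if a i = some j then 1 else 0

/-- The naïve Boston mechanism: the average of `NBMassign` over all `n!` priority orderings. -/
noncomputable def NBM {n m : ℕ} (q : Fin m → ℕ) (t : Fin n → Pref m) : Fin n → Fin m → ℝ :=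
  fun i j => (∑ π : Equiv.Perm (Fin n), detAlloc (NBMassign q t π) i j) / (Nat.factorial n)

/-- The adaptive Boston mechanism: the average of `ABMassign` over all `n!` priority orderings. -/
noncomputable def ABM {n m : ℕ} (q : Fin m → ℕ) (t : Fin n → Pref m) : Fin n → Fin m → ℝ :=
  fun i j => (∑ π : Equiv.Perm (Fin n), detAlloc (ABMassign q t π) i j) / (Nat.factorial n)

/-- Random serial dictatorship: the average of `SDassign` over all `n!` priority orderings. -/
noncomputable def RSD {n m : ℕ} (q : Fin m → ℕ) (t : Fin n → Pref m) : Fin n → Fin m → ℝ :=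
  fun i j => (∑ π : Equiv.Perm (Fin n), detAlloc (SDassign q t π) i j) / (Nat.factorial n)

/-- `x` is an allocation for capacities `q`. -/
def IsAlloc {n m : ℕ} (q : Fin m → ℕ) (x : Fin n → Fin m → ℝ) : Prop :=
  (∀ i j, 0 ≤ x i j ∧ x i j ≤ 1) ∧ (∀ i, ∑ j, x i j = 1) ∧ ∀ j, ∑ i, x i j ≤ q j

/-- First-order stochastic dominance of `v` over `w` with respect to the ranking `ti`. -/
def FOSD {m : ℕ} (ti : Pref m) (v w : Fin m → ℝ) : Prop :=
  ∀ K : Fin m, ∑ k ∈ Finset.Iic K, w (ti k) ≤ ∑ k ∈ Finset.Iic K, v (ti k)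

/-- Strict first-order stochastic dominance. -/
def StrictFOSD {m : ℕ} (ti : Pref m) (v w : Fin m → ℝ) : Prop :=
  FOSD ti v w ∧ ∃ K : Fin m, ∑ k ∈ Finset.Iic K, w (ti k) < ∑ k ∈ Finset.Iic K, v (ti k)

/-- `x` ordinally dominates `y` at type profile `t`. -/
def OrdDom {n m : ℕ} (t : Fin n → Pref m) (x y : Fin n → Fin m → ℝ) : Prop :=
  ∀ i, FOSD (t i) (x i) (y i)

/-- `x` strictly ordinally dominates `y` at type profile `t`. -/
def StrictOrdDom {n m : ℕ} (t : Fin n → Pref m) (x y : Fin n → Fin m → ℝ) : Prop :=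
  OrdDom t x y ∧ ∃ i : Fin n, ∃ K : Fin m,
    ∑ k ∈ Finset.Iic K, y i (t i k) < ∑ k ∈ Finset.Iic K, x i (t i k)

/-- The rank distribution of allocation `x` at profile `t`: `rankDist t x k` is the
expected number of `k`-th (0-indexed) choices allocated. -/
noncomputable def rankDist {n m : ℕ} (t : Fin n → Pref m) (x : Fin n → Fin m → ℝ)
    (k : Fin m) : ℝ :=
  ∑ i, x i (t i k)

/-- `x` weakly rank dominates `y` at profile `t`. -/
def WeakRankDom {n m : ℕ} (t : Fin n → Pref m) (x y : Fin n → Fin m → ℝ) : Prop :=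
  ∀ K : Fin m, ∑ k ∈ Finset.Iic K, rankDist t y k ≤ ∑ k ∈ Finset.Iic K, rankDist t x k

/-- `x` strictly rank dominates `y` at profile `t`. -/
def StrictRankDom {n m : ℕ} (t : Fin n → Pref m) (x y : Fin n → Fin m → ℝ) : Prop :=
  WeakRankDom t x y ∧ ∃ K : Fin m,
    ∑ k ∈ Finset.Iic K, rankDist t y k < ∑ k ∈ Finset.Iic K, rankDist t x k

/-- Feasibility of a deterministic (total) assignment. -/
def Feasible {n m : ℕ} (q : Fin m → ℕ) (y : Fin n → Fin m) : Prop :=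
  ∀ j, (Finset.univ.filter fun i => y i = j).card ≤ q j

/-- Ex-post efficiency at `t` of a deterministic assignment `a`: no feasible
deterministic assignment makes every agent weakly better off and some agent
strictly better off. -/
def ExPostEfficientAt {n m : ℕ} (q : Fin m → ℕ) (t : Fin n → Pref m)
    (a : Fin n → Option (Fin m)) : Prop :=
  ¬ ∃ y : Fin n → Fin m, Feasible q y ∧
      (∀ i j, a i = some j → (t i).symm (y i) ≤ (t i).symm j) ∧
      ∃ i j, a i = some j ∧ (t i).symm (y i) < (t i).symm j

/-- The expected number of allocated first choices under `x` at profile `t`. -/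
noncomputable def d1 {n m : ℕ} (t : Fin n → Pref m) (x : Fin n → Fin m → ℝ) : ℝ :=
  ∑ i, ∑ j, if ((t i).symm j : ℕ) = 0 then x i j else 0

/-- `x` is first-choice-maximizing at profile `t`. -/
def FirstChoiceMax {n m : ℕ} (q : Fin m → ℕ) (t : Fin n → Pref m)
    (x : Fin n → Fin m → ℝ) : Prop :=
  IsAlloc q x ∧ ∀ y : Fin n → Fin m → ℝ, IsAlloc q y → d1 t y ≤ d1 t x

/-- `u` is a vNM utility function consistent with the ranking `ti`. -/
def Consistent {m : ℕ} (ti : Pref m) (u : Fin m → ℝ) : Prop :=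
  ∀ a b : Fin m, ti.symm a < ti.symm b → u b < u a

/-- Uniformly relatively bounded indifference with bound `r`. -/
def URBI {m : ℕ} (r : ℝ) (u : Fin m → ℝ) : Prop :=
  ∀ a b : Fin m, u b < u a → u b - (⨅ j, u j) ≤ r * (u a - (⨅ j, u j))

theorem favorite_eq_some_iff {m : ℕ} (ti : Pref m) (c : Fin m → ℕ) (j : Fin m) :
    favorite ti c = some j ↔ 0 < c j ∧ ∀ j', 0 < c j' → ti.symm j ≤ ti.symm j' := by
  unfold favorite
  rw [Option.map_eq_some_iff]
  simp only [List.find?_eq_some_iff_getElem]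
  constructor
  · rintro ⟨k, ⟨hk, i, hi, hik, hlt⟩, rfl⟩
    refine ⟨by simpa using hk, fun j' hj' => ?_⟩
    by_contra! hcon
    simp only [List.getElem_finRange] at hik hlt
    subst hik
    have h1 : (ti.symm j' : ℕ) < i := by simpa [Fin.lt_def] using hcon
    have h2 := hlt _ h1
    simp at h2
    omega
  · rintro ⟨h0, hmin⟩
    refine ⟨ti.symm j, ⟨by simpa using h0, ti.symm j, by simp, by simp, ?_⟩, by simp⟩
    intro k hk
    simp only [List.getElem_finRange]
    by_contra! hcon
    have h2 := hmin (ti ⟨k, by omega⟩) (by simpa [Nat.pos_iff_ne_zero] using hcon)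
    rw [Equiv.symm_apply_apply, Fin.le_def] at h2
    simp only at h2
    omega

theorem exists_favorite {m : ℕ} (ti : Pref m) (c : Fin m → ℕ) {j : Fin m} (hj : 0 < c j) :
    ∃ j', favorite ti c = some j' := by
  rw [← Option.isSome_iff_exists]
  unfold favorite
  simp only [Option.isSome_map, List.find?_isSome]
  exact ⟨ti.symm j, by simp, by simpa using hj⟩

/-- A favourite object stays the favourite when capacities decrease, as long as it has copies
left. -/
theorem favorite_anti {m : ℕ} {ti : Pref m} {c d : Fin m → ℕ} (hdc : ∀ j, d j ≤ c j) {j : Fin m}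
    (h : favorite ti c = some j) (hj : 0 < d j) : favorite ti d = some j := by
  rw [favorite_eq_some_iff] at h ⊢
  exact ⟨hj, fun j' hj' => h.2 j' (hj'.trans_le (hdc j'))⟩

/-- One step of serial dictatorship: agent `i` takes its favourite remaining object. -/
def sdStep {n m : ℕ} (t : Fin n → Pref m) (s : (Fin n → Option (Fin m)) × (Fin m → ℕ))
    (i : Fin n) : (Fin n → Option (Fin m)) × (Fin m → ℕ) :=
  match favorite (t i) s.2 with
  | none => s
  | some j => (Function.update s.1 i (some j), Function.update s.2 j (s.2 j - 1))

theorem sdStep_of_favorite {n m : ℕ} {t : Fin n → Pref m}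
    {s : (Fin n → Option (Fin m)) × (Fin m → ℕ)} {i : Fin n} {j : Fin m}
    (h : favorite (t i) s.2 = some j) :
    sdStep t s i = (Function.update s.1 i (some j), Function.update s.2 j (s.2 j - 1)) := by
  simp [sdStep, h]

/-- The state (partial assignment and remaining capacities) reached by serial dictatorship when
the agents in the list `L` are processed in that order. -/
def sdRun {n m : ℕ} (q : Fin m → ℕ) (t : Fin n → Pref m) (L : List (Fin n)) :
    (Fin n → Option (Fin m)) × (Fin m → ℕ) :=
  L.foldl (sdStep t) ((fun _ => none), q)

theorem sdRun_concat {n m : ℕ} (q : Fin m → ℕ) (t : Fin n → Pref m) (L : List (Fin n))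
    (i : Fin n) : sdRun q t (L ++ [i]) = sdStep t (sdRun q t L) i := by
  simp [sdRun]

/-- Processing one application in a round of a Boston mechanism, the step folded over by
`applyRound`. -/
def bmStep {n m : ℕ} (choice : Fin n → Option (Fin m))
    (s : (Fin n → Option (Fin m)) × (Fin m → ℕ)) (i : Fin n) :
    (Fin n → Option (Fin m)) × (Fin m → ℕ) :=
  match s.1 i with
  | some _ => s
  | none =>
    match choice i with
    | none => s
    | some j =>
      if 0 < s.2 j then
        (Function.update s.1 i (some j), Function.update s.2 j (s.2 j - 1))
      else s

/-- The state `s` is the one reached by serial dictatorship along `L`, where `L` lists exactly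
the agents assigned in `s`; each of them has used up one copy. -/
structure SDState {n m : ℕ} (q : Fin m → ℕ) (t : Fin n → Pref m) (L : List (Fin n))
    (s : (Fin n → Option (Fin m)) × (Fin m → ℕ)) : Prop where
  nodup : L.Nodup
  run : sdRun q t L = s
  mem_iff : ∀ i, i ∈ L ↔ s.1 i ≠ none
  total : L.length + ∑ j, s.2 j = ∑ j, q j

theorem SDState.concat {n m : ℕ} {q : Fin m → ℕ} {t : Fin n → Pref m} {L : List (Fin n)}
    {s : (Fin n → Option (Fin m)) × (Fin m → ℕ)} (h : SDState q t L s) {i : Fin n} {j : Fin m}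
    (hi : s.1 i = none) (hf : favorite (t i) s.2 = some j) :
    SDState q t (L ++ [i])
      (Function.update s.1 i (some j), Function.update s.2 j (s.2 j - 1)) where
  nodup := by
    have : i ∉ L := by simp [h.mem_iff, hi]
    rw [← List.concat_eq_append]
    exact h.nodup.concat this
  run := by rw [sdRun_concat, h.run, sdStep_of_favorite hf]
  mem_iff k := by
    by_cases hk : k = i
    · subst hk; simp
    · simp [hk, h.mem_iff]
  total := by
    have h1 := ((favorite_eq_some_iff _ _ _).1 hf).1
    have h2 := h.total
    rw [← Finset.add_sum_erase _ _ (mem_univ j)] at h2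
    rw [Finset.sum_update_of_mem (mem_univ j), ← Finset.erase_eq]
    simp only [List.length_append, List.length_singleton]
    omega

/-- A single application either changes nothing or extends the serial dictatorship by the
applicant.  The vector `c` stands for the capacities at the start of the round. -/
theorem SDState.bmStep {n m : ℕ} {q : Fin m → ℕ} {t : Fin n → Pref m} {L : List (Fin n)}
    {s : (Fin n → Option (Fin m)) × (Fin m → ℕ)} (h : SDState q t L s) {c : Fin m → ℕ}
    (hc : ∀ j, s.2 j ≤ c j) (i : Fin n) :
    (bmStep (fun i => favorite (t i) c) s i = s ∧
      ¬ (s.1 i = none ∧ ∃ j, favorite (t i) c = some j ∧ 0 < s.2 j)) ∨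
    (SDState q t (L ++ [i]) (bmStep (fun i => favorite (t i) c) s i) ∧
      ∀ j, (bmStep (fun i => favorite (t i) c) s i).2 j ≤ c j) := by
  cases hi : s.1 i with
  | some a => left; simp [_root_.bmStep, hi]
  | none =>
    cases hf : favorite (t i) c with
    | none => left; simp [_root_.bmStep, hi, hf]
    | some j =>
      by_cases hj : 0 < s.2 j
      · right
        have e : _root_.bmStep (fun i => favorite (t i) c) s i
            = (Function.update s.1 i (some j), Function.update s.2 j (s.2 j - 1)) := by
          simp [_root_.bmStep, hi, hf, hj]
        rw [e]
        refine ⟨h.concat hi (favorite_anti hc hf hj), fun k => ?_⟩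
        by_cases hk : k = j
        · subst hk
          have := hc k
          simp only [Function.update_self]
          omega
        · simpa [hk] using hc k
      · left; simp [_root_.bmStep, hi, hf, hj]

/-- A round extends the serial dictatorship, by at least one agent if some applicant would be
accepted at the current capacities. -/
theorem SDState.applyRound {n m : ℕ} {q : Fin m → ℕ} {t : Fin n → Pref m} {c : Fin m → ℕ}
    (order : List (Fin n)) {L : List (Fin n)}
    {s : (Fin n → Option (Fin m)) × (Fin m → ℕ)} (h : SDState q t L s)
    (hc : ∀ j, s.2 j ≤ c j) :
    ∃ L', SDState q t L' (applyRound (fun i => favorite (t i) c) order s) ∧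
      L.length ≤ L'.length ∧
      ((∃ i ∈ order, s.1 i = none ∧ ∃ j, favorite (t i) c = some j ∧ 0 < s.2 j) →
        L.length < L'.length) := by
  change ∃ L', SDState q t L' (order.foldl (_root_.bmStep fun i => favorite (t i) c) s) ∧ _
  induction order generalizing L s with
  | nil => exact ⟨L, h, le_rfl, by simp⟩
  | cons a order ih =>
    rw [List.foldl_cons]
    rcases h.bmStep hc a with ⟨e, hna⟩ | ⟨h', hc'⟩
    · rw [e]
      obtain ⟨L', h1, h2, h3⟩ := ih h hc
      refine ⟨L', h1, h2, ?_⟩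
      rintro ⟨i, hi, hrest⟩
      rcases List.mem_cons.1 hi with rfl | hi
      · exact absurd hrest hna
      · exact h3 ⟨i, hi, hrest⟩
    · obtain ⟨L', h1, h2, -⟩ := ih h' hc'
      rw [List.length_append, List.length_singleton] at h2
      exact ⟨L', h1, by omega, fun _ => by omega⟩

theorem mem_priorityList {n : ℕ} (π : Equiv.Perm (Fin n)) (i : Fin n) : i ∈ priorityList π := by
  simp only [priorityList, List.mem_map, List.mem_finRange, true_and]
  exact ⟨π i, by simp⟩

theorem SDState.round_progress {n m : ℕ} {q : Fin m → ℕ} (hq : n ≤ ∑ j, q j)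
    {t : Fin n → Pref m} (π : Equiv.Perm (Fin n)) {L : List (Fin n)}
    {s : (Fin n → Option (Fin m)) × (Fin m → ℕ)} (h : SDState q t L s) :
    ∃ L', SDState q t L' (_root_.applyRound (fun i => favorite (t i) s.2) (priorityList π) s) ∧
      L.length ≤ L'.length ∧ (L.length < n → L.length < L'.length) := by
  obtain ⟨L', h1, h2, h3⟩ := h.applyRound (priorityList π) (fun j => le_refl (s.2 j))
  refine ⟨L', h1, h2, fun hlt => h3 ?_⟩
  obtain ⟨i, hi⟩ : ∃ i, i ∉ L := by
    by_contra! hall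
    have := List.toFinset_card_of_nodup h.nodup
    have hu : L.toFinset = univ := by ext i; simp [hall i]
    rw [hu, card_univ, Fintype.card_fin] at this
    omega
  have ht := h.total
  obtain ⟨j, -, hj⟩ : ∃ j ∈ univ, 0 < s.2 j := by
    apply Finset.exists_lt_of_sum_lt
    simp only [sum_const_zero]
    omega
  obtain ⟨j', hj'⟩ := exists_favorite (t i) s.2 hj
  refine ⟨i, mem_priorityList π i, ?_, j', hj', ((favorite_eq_some_iff _ _ _).1 hj').1⟩
  simpa [h.mem_iff] using hi

theorem abm_sdState {n m : ℕ} {q : Fin m → ℕ} (hq : n ≤ ∑ j, q j)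
    (t : Fin n → Pref m) (π : Equiv.Perm (Fin n)) (k : ℕ) :
    ∃ L, SDState q t L
      ((fun st => applyRound (fun i => favorite (t i) st.2) (priorityList π) st)^[k]
        ((fun _ => none), q)) ∧ min k n ≤ L.length := by
  induction k with
  | zero => exact ⟨[], ⟨List.nodup_nil, rfl, by simp, by simp⟩, by simp⟩
  | succ k ih =>
    obtain ⟨L, h, hL⟩ := ih
    obtain ⟨L', h1, h2, h3⟩ := h.round_progress hq π
    rw [Function.iterate_succ_apply']
    exact ⟨L', h1, by omega⟩

/-- A duplicate-free list of all agents is the priority list of a priority ordering. -/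
theorem exists_priorityList_eq {n : ℕ} {L : List (Fin n)} (hnd : L.Nodup)
    (hall : ∀ i, i ∈ L) : ∃ π : Equiv.Perm (Fin n), priorityList π = L := by
  have hlen : L.length = n := by
    have hu : L.toFinset = univ := by ext i; simp [hall i]
    have := List.toFinset_card_of_nodup hnd
    rw [hu, card_univ, Fintype.card_fin] at this
    exact this.symm
  refine ⟨((finCongr hlen.symm).trans (hnd.getEquivOfForallMemList L hall)).symm, ?_⟩
  apply List.ext_getElem
  · simp [priorityList, hlen]
  · intro k h1 h2
    simp [priorityList]

/-- A feasible `y` that weakly improves on serial dictatorship along `L` for all agents in `L`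
agrees with it on `L`.  The capacity count in the conclusion drives the induction: it shows that
`y i` is still available when it is agent `i`'s turn. -/
theorem sd_rigid {n m : ℕ} {q : Fin m → ℕ} {t : Fin n → Pref m} {y : Fin n → Fin m}
    (hy : Feasible q y) (L : List (Fin n)) (hnd : L.Nodup)
    (hw : ∀ i ∈ L, ∀ j, (sdRun q t L).1 i = some j → (t i).symm (y i) ≤ (t i).symm j) :
    (∀ i ∈ L, (sdRun q t L).1 i = some (y i)) ∧
      ∀ j, (sdRun q t L).2 j + (L.filter fun i => y i = j).length = q j := by
  induction L using List.reverseRecOn with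
  | nil => simp [sdRun]
  | append_singleton P i ih =>
    have hP : P.Nodup := (List.nodup_append.1 hnd).1
    have hiP : i ∉ P := by
      have := (List.nodup_append.1 hnd).2.2
      exact fun hm => this i hm i (by simp) rfl
    have hold : ∀ k ∈ P, (sdRun q t (P ++ [i])).1 k = (sdRun q t P).1 k := by
      intro k hk
      have hki : k ≠ i := fun e => hiP (e ▸ hk)
      rw [sdRun_concat, sdStep]
      split <;> simp [hki]
    obtain ⟨h1, h2⟩ := ih hP (fun k hk j hj =>
      hw k (by simp [hk]) j (by rw [hold k hk, hj]))
    have havail : 0 < (sdRun q t P).2 (y i) := by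
      have hcard : ((P ++ [i]).filter fun k => y k = y i).length ≤ q (y i) := by
        rw [← List.toFinset_card_of_nodup (hnd.filter _)]
        refine le_trans (card_le_card ?_) (hy (y i))
        intro k hk
        simp only [List.mem_toFinset, List.mem_filter, decide_eq_true_eq] at hk
        simpa using hk.2
      have := h2 (y i)
      simp only [List.filter_append, List.length_append, List.filter_singleton,
        decide_true, cond_true, List.length_singleton] at hcard
      omega
    obtain ⟨j, hj⟩ := exists_favorite (t i) _ havail
    have hrun := sdRun_concat q t P i
    rw [sdStep_of_favorite hj] at hrun
    have hle := ((favorite_eq_some_iff _ _ _).1 hj).2 _ havail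
    have hge := hw i (by simp) j (by simp [hrun])
    have hyj : y i = j := (t i).symm.injective (le_antisymm hge hle)
    subst hyj
    constructor
    · intro k hk
      rcases List.mem_append.1 hk with hk | hk
      · rw [hold k hk, h1 k hk]
      · rw [List.mem_singleton.1 hk, hrun]
        simp
    · intro j
      have := h2 j
      rw [hrun]
      by_cases hji : j = y i
      · subst hji
        simp only [Function.update_self, List.filter_append, List.length_append,
          List.filter_singleton, decide_true, cond_true, List.length_singleton]
        omega
      · have hij : y i ≠ j := fun e => hji e.symm
        simpa [List.filter_append, List.filter_singleton, hji, hij] using this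

/-- for every setting, type profile and priority ordering `π`, there is a
priority ordering `π'` with `ABM_π(t) = SD_{π'}(t)`; in particular `ABM_π(t)` is
ex-post efficient at `t`. -/
theorem abm_pi_is_sd_and_ex_post_efficient (n m : ℕ) (q : Fin m → ℕ)
    (hq : n ≤ ∑ j, q j) (t : Fin n → Pref m) (π : Equiv.Perm (Fin n)) :
    (∃ π' : Equiv.Perm (Fin n), ABMassign q t π = SDassign q t π') ∧
      ExPostEfficientAt q t (ABMassign q t π) := by
  obtain ⟨L, hL, hlen⟩ := abm_sdState hq t π n
  rw [min_self] at hlen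
  have hall : ∀ i, i ∈ L := by
    have hu : L.toFinset = univ := by
      apply Finset.eq_univ_of_card
      rw [List.toFinset_card_of_nodup hL.nodup, Fintype.card_fin]
      exact le_antisymm (by simpa using hL.nodup.length_le_card) hlen
    intro i
    rw [← List.mem_toFinset, hu]
    exact mem_univ i
  have hABM : ABMassign q t π = (sdRun q t L).1 := by rw [hL.run]; rfl
  constructor
  · obtain ⟨π', hπ'⟩ := exists_priorityList_eq hL.nodup hall
    refine ⟨π', ?_⟩
    rw [hABM, ← hπ']
    rfl
  · rintro ⟨y, hy, hw, i, j, hij, hlt⟩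
    rw [hABM] at hw hij
    have hr := (sd_rigid hy L hL.nodup fun k _ => hw k).1 i (hall i)
    rw [hij] at hr
    rw [Option.some.inj hr] at hlt
    exact lt_irrefl _ hlt
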